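/- Let a > √3, Δt > 0, λ > 0, and τ > 0. Let M_L⁻, M_L⁺, M_R⁻, M_R⁺ ∈ ℝ⁵ each be of two-node Gaussian-EQMOM form (positive weights, σ > 0), with interface speeds δ_L±, δ_R± and HLL fluxes F̂_L, F̂_R as in the HLL construction, and cell average M̄ = ½(M_L⁺ + M_R⁻). Set ρ = M̄₀, U = M̄₁/M̄₀, θ = M̄₂/M̄₀ − U² (note that θ > 0 holds automatically here), and let G = ρ·(1, U, U² + θ, U³ + 3Uθ, U⁴ + 6U²θ + 3θ²) be the Maxwellian moment vector. Define the semi-implicit update M_new by (1 + Δt/τ) M_new = M̄ − λ(F̂_R − F̂_L) + (Δt/τ) G. If λ(δ_L⁺ − δ_L⁻) ≤ ½ and λ(δ_R⁺ − δ_R⁻) ≤ ½, then H₂(M_new) is positive definite. -/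

import Mathlib

open MeasureTheory Real

/-- The `k`-th moment `Δ_k(v, s²)` of the normal distribution with mean `v` and variance `s²`. -/
noncomputable def gaussMoment (v s : ℝ) (k : ℕ) : ℝ :=
  ∫ x : ℝ, x ^ k * ((2 * π * s ^ 2) ^ (-(1 : ℝ) / 2) * Real.exp (-(x - v) ^ 2 / (2 * s ^ 2)))

/-- The `3×3` Hankel matrix `H₂(c)` of a vector `c ∈ ℝ⁵`, with `(j,k)` entry `c_{j+k}`. -/
noncomputable def hankel2 (c : Fin 5 → ℝ) : Matrix (Fin 3) (Fin 3) ℝ :=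
  Matrix.of fun j k => c ⟨j.1 + k.1, by have := j.isLt; have := k.isLt; omega⟩

/-- Parameters of a two-node Gaussian-EQMOM state: positive weights and positive `σ`. -/
structure EqmomParams where
  r1 : ℝ
  r2 : ℝ
  v1 : ℝ
  v2 : ℝ
  sig : ℝ
  hr1 : 0 < r1
  hr2 : 0 < r2
  hsig : 0 < sig

/-- Moment vector `M_k = ρ₁Δ_k(v₁,σ²) + ρ₂Δ_k(v₂,σ²)`, `k = 0,…,4`. -/
noncomputable def EqmomParams.M (W : EqmomParams) : Fin 5 → ℝ :=
  fun k => W.r1 * gaussMoment W.v1 W.sig k.1 + W.r2 * gaussMoment W.v2 W.sig k.1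

/-- Flux vector `F(M) = (M₁,…,M₄,M₅)` with `M₅ = ρ₁Δ₅(v₁,σ²) + ρ₂Δ₅(v₂,σ²)`. -/
noncomputable def EqmomParams.F (W : EqmomParams) : Fin 5 → ℝ :=
  fun k => W.r1 * gaussMoment W.v1 W.sig (k.1 + 1) + W.r2 * gaussMoment W.v2 W.sig (k.1 + 1)

/-- Wave speed `δ⁺(M) = max{v₁+aσ, v₂+aσ, 0}`. -/
noncomputable def EqmomParams.dp (W : EqmomParams) (a : ℝ) : ℝ :=
  max (max (W.v1 + a * W.sig) (W.v2 + a * W.sig)) 0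

/-- Wave speed `δ⁻(M) = min{v₁−aσ, v₂−aσ, 0}`. -/
noncomputable def EqmomParams.dm (W : EqmomParams) (a : ℝ) : ℝ :=
  min (min (W.v1 - a * W.sig) (W.v2 - a * W.sig)) 0

/-- HLL numerical flux
`F̂(M⁻,M⁺) = (δ̂⁺F(M⁻) − δ̂⁻F(M⁺) + δ̂⁺δ̂⁻(M⁺ − M⁻))/(δ̂⁺ − δ̂⁻)`. -/
noncomputable def hllFlux (dp dm : ℝ) (Mm Mp Fm Fp : Fin 5 → ℝ) : Fin 5 → ℝ :=
  fun k => (dp * Fm k - dm * Fp k + dp * dm * (Mp k - Mm k)) / (dp - dm)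

/-- Maxwellian moment vector `G = ρ(1, U, U²+θ, U³+3Uθ, U⁴+6U²θ+3θ²)`. -/
noncomputable def maxwellMoments (ρ U θ : ℝ) : Fin 5 → ℝ :=
  ![ρ, ρ * U, ρ * (U ^ 2 + θ), ρ * (U ^ 3 + 3 * U * θ),
    ρ * (U ^ 4 + 6 * U ^ 2 * θ + 3 * θ ^ 2)]

/-!
Three-point Gauss-Hermite quadrature integrates polynomials of degree at most five exactly, so on
the moments involved a Gaussian is a discrete measure with nodes `v`, `v ± √3 s`. When these nodes
lie in `[N, P]`, the Hankel matrices of moments `M` and flux `F` satisfy `N H₂(M) ≤ H₂(F) ≤ P H₂(M)`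
in the Loewner order, a condition stable under positive combinations. The CFL condition then makes
`½ M_L⁺ + λ F̂_L` and `½ M_R⁻ - λ F̂_R` nonnegative combinations of matrices of the form
`H₂(M)`, `H₂(F) - N H₂(M)` and `P H₂(M) - H₂(F)`, and the Maxwellian contributes strict
positivity.
-/

open ProbabilityTheory Matrix
open scoped MatrixOrder NNReal

section GaussianMoments

lemma hasDerivAt_gaussianPDFReal (m : ℝ) (v : ℝ≥0) (x : ℝ) :
    HasDerivAt (gaussianPDFReal m v) (-((x - m) / v) * gaussianPDFReal m v x) x := by
  have hexponent : HasDerivAt (fun y : ℝ => -(y - m) ^ 2 / (2 * v)) (-((x - m) / v)) x := by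
    refine ((((hasDerivAt_id x).sub_const m).pow 2).neg.div_const (2 * (v : ℝ))).congr_deriv ?_
    simp only [id_eq]
    rw [← mul_div_mul_left (x - m) (v : ℝ) two_ne_zero]
    ring
  refine (hexponent.exp.const_mul _).congr_deriv ?_
  rw [gaussianPDFReal]
  ring

lemma integrable_gaussianReal_iff {m : ℝ} {v : ℝ≥0} (hv : v ≠ 0) {f : ℝ → ℝ} :
    Integrable f (gaussianReal m v) ↔ Integrable fun x => gaussianPDFReal m v x * f x := by
  rw [gaussianReal_of_var_ne_zero m hv,
    integrable_withDensity_iff_integrable_smul' (measurable_gaussianPDF m v)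
      (ae_of_all _ fun _ => gaussianPDF_lt_top)]
  simp only [toReal_gaussianPDF, smul_eq_mul]

/-- **Stein's identity** -/
lemma integral_sub_mul_gaussianReal {m : ℝ} {v : ℝ≥0} {f f' : ℝ → ℝ}
    (hf : ∀ x, HasDerivAt f (f' x) x) (hf_int : Integrable f (gaussianReal m v))
    (hf'_int : Integrable f' (gaussianReal m v))
    (hxf_int : Integrable (fun x => (x - m) * f x) (gaussianReal m v)) :
    ∫ x, (x - m) * f x ∂gaussianReal m v = v * ∫ x, f' x ∂gaussianReal m v := by
  obtain rfl | hv := eq_or_ne v 0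
  · simp
  rw [integrable_gaussianReal_iff hv] at hf_int hf'_int hxf_int
  have hderiv (x : ℝ) : HasDerivAt (fun x => gaussianPDFReal m v x * f x)
      (gaussianPDFReal m v x * f' x - (v : ℝ)⁻¹ * (gaussianPDFReal m v x * ((x - m) * f x))) x :=
    ((hasDerivAt_gaussianPDFReal m v x).mul (hf x)).congr_deriv (by ring)
  have hzero := integral_eq_zero_of_hasDerivAt_of_integrable hderiv
    (hf'_int.sub (hxf_int.const_mul _)) hf_int
  rw [integral_sub hf'_int (hxf_int.const_mul _), integral_const_mul, sub_eq_zero] at hzero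
  simp only [integral_gaussianReal_eq_integral_smul hv, smul_eq_mul]
  rw [hzero, mul_inv_cancel_left₀ (by exact_mod_cast hv)]

lemma integrable_pow_gaussianReal (m : ℝ) (v : ℝ≥0) (k : ℕ) :
    Integrable (fun x : ℝ => x ^ k) (gaussianReal m v) :=
  integrable_pow_of_mem_interior_integrableExpSet (X := id) (by simp) k

lemma integral_pow_succ_gaussianReal (m : ℝ) (v : ℝ≥0) (k : ℕ) :
    ∫ x, x ^ (k + 1) ∂gaussianReal m v =
      m * ∫ x, x ^ k ∂gaussianReal m v + k * v * ∫ x, x ^ (k - 1) ∂gaussianReal m v := by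
  have hint := integrable_pow_gaussianReal m v
  have hsplit : (fun x : ℝ => (x - m) * x ^ k) = fun x => x ^ (k + 1) - m * x ^ k := by
    ext x; ring
  have hstein := integral_sub_mul_gaussianReal (m := m) (v := v) (hasDerivAt_pow k) (hint k)
    ((hint (k - 1)).const_mul _) (hsplit ▸ (hint (k + 1)).sub ((hint k).const_mul m))
  rw [hsplit, integral_sub (hint _) ((hint k).const_mul m), integral_const_mul,
    integral_const_mul] at hstein
  linear_combination hstein

variable {s : ℝ}

lemma gaussMoment_eq_integral_gaussianReal (v : ℝ) (hs : s ≠ 0) (k : ℕ) :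
    gaussMoment v s k = ∫ x, x ^ k ∂gaussianReal v (s ^ 2).toNNReal := by
  have hvar : (s ^ 2).toNNReal ≠ 0 := by simpa using hs
  rw [gaussMoment, integral_gaussianReal_eq_integral_smul hvar]
  refine integral_congr_ae (ae_of_all _ fun x => ?_)
  simp only [gaussianPDFReal, Real.coe_toNNReal _ (sq_nonneg s), smul_eq_mul, Real.sqrt_eq_rpow]
  rw [neg_div, Real.rpow_neg (by positivity), mul_comm]

lemma gaussMoment_zero (v : ℝ) (hs : s ≠ 0) : gaussMoment v s 0 = 1 := by
  simp [gaussMoment_eq_integral_gaussianReal v hs]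

lemma gaussMoment_succ (v : ℝ) (hs : s ≠ 0) (k : ℕ) :
    gaussMoment v s (k + 1) = v * gaussMoment v s k + k * s ^ 2 * gaussMoment v s (k - 1) := by
  simp only [gaussMoment_eq_integral_gaussianReal v hs, integral_pow_succ_gaussianReal v _ k,
    Real.coe_toNNReal _ (sq_nonneg s)]

/-- Weights of the three-point Gauss-Hermite quadrature rule for a probability measure. -/
noncomputable def hermiteWeight : Fin 3 → ℝ := ![1 / 6, 2 / 3, 1 / 6]

/-- Nodes of the three-point Gauss-Hermite quadrature rule for the normal distribution with
mean `v` and variance `s²`. -/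
noncomputable def hermiteNode (v s : ℝ) : Fin 3 → ℝ := ![v - √3 * s, v, v + √3 * s]

lemma hermiteWeight_pos (i : Fin 3) : 0 < hermiteWeight i := by
  fin_cases i <;> norm_num [hermiteWeight]

lemma hermiteNode_injective (v : ℝ) (hs : s ≠ 0) : Function.Injective (hermiteNode v s) := by
  have hoffset : √3 * s ≠ 0 := mul_ne_zero (by positivity) hs
  intro i j
  fin_cases i <;> fin_cases j <;>
    simp only [hermiteNode, Fin.zero_eta, Fin.mk_one, Fin.reduceFinMk, cons_val] <;> grind

lemma gaussMoment_eq_sum_hermite (v : ℝ) (hs : s ≠ 0) {k : ℕ} (hk : k ≤ 5) :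
    gaussMoment v s k = ∑ i, hermiteWeight i * hermiteNode v s i ^ k := by
  have hsqrt : √3 ^ 2 = (3 : ℝ) := Real.sq_sqrt (by norm_num)
  simp only [Fin.sum_univ_three, hermiteWeight, hermiteNode, cons_val]
  interval_cases k <;> simp only [gaussMoment_succ v hs, gaussMoment_zero v hs] <;> grind

end GaussianMoments

section Hankel

lemma hankel2_add (c d : Fin 5 → ℝ) : hankel2 (c + d) = hankel2 c + hankel2 d := rfl

lemma hankel2_sub (c d : Fin 5 → ℝ) : hankel2 (c - d) = hankel2 c - hankel2 d := rfl

lemma hankel2_smul (r : ℝ) (c : Fin 5 → ℝ) : hankel2 (r • c) = r • hankel2 c := rfl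

section DiscreteMeasure

variable {ι : Type*} [Fintype ι] {w x : ι → ℝ}

lemma hankel2_sum_pow [DecidableEq ι] :
    hankel2 (fun k => ∑ i, w i * x i ^ (k : ℕ)) =
      (of fun i (j : Fin 3) => x i ^ (j : ℕ))ᴴ * diagonal w *
        of fun i (j : Fin 3) => x i ^ (j : ℕ) := by
  ext j k
  rw [mul_apply]
  simp only [hankel2, of_apply, mul_diagonal, conjTranspose_apply, star_trivial]
  exact Finset.sum_congr rfl fun i _ => by ring

lemma hankel2_sum_pow_nonneg (hw : ∀ i, 0 ≤ w i) :
    0 ≤ hankel2 (fun k => ∑ i, w i * x i ^ (k : ℕ)) := by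
  classical
  rw [hankel2_sum_pow, nonneg_iff_posSemidef]
  exact (PosSemidef.diagonal hw).conjTranspose_mul_mul_same _

lemma posDef_hankel2_sum_pow {w x : Fin 3 → ℝ} (hw : ∀ i, 0 < w i) (hx : Function.Injective x) :
    (hankel2 fun k => ∑ i, w i * x i ^ (k : ℕ)).PosDef := by
  rw [hankel2_sum_pow]
  refine (PosDef.diagonal hw).conjTranspose_mul_mul_same (mulVec_injective_of_isUnit ?_)
  exact (isUnit_iff_isUnit_det _).2 (det_vandermonde_ne_zero_iff.2 hx).isUnit

lemma smul_hankel2_add_smul_hankel2_succ_nonneg {α β : ℝ} (hw : ∀ i, 0 ≤ w i)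
    (hx : ∀ i, 0 ≤ α + β * x i) :
    0 ≤ α • hankel2 (fun k => ∑ i, w i * x i ^ (k : ℕ)) +
      β • hankel2 (fun k => ∑ i, w i * x i ^ (k + 1 : ℕ)) := by
  rw [← hankel2_smul, ← hankel2_smul, ← hankel2_add]
  convert hankel2_sum_pow_nonneg (x := x) fun i => mul_nonneg (hw i) (hx i) using 2
  ext k
  simp only [Pi.add_apply, Pi.smul_apply, smul_eq_mul, Finset.mul_sum, ← Finset.sum_add_distrib]
  exact Finset.sum_congr rfl fun i _ => by ring

end DiscreteMeasure

lemma posDef_hankel2_gaussMoment (v : ℝ) {s : ℝ} (hs : s ≠ 0) :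
    (hankel2 fun k => gaussMoment v s k).PosDef := by
  simp only [fun k : Fin 5 => gaussMoment_eq_sum_hermite v hs (show (k : ℕ) ≤ 5 by omega)]
  exact posDef_hankel2_sum_pow hermiteWeight_pos (hermiteNode_injective v hs)

lemma maxwellMoments_eq_smul_gaussMoment (ρ U : ℝ) {θ : ℝ} (hθ : 0 < θ) :
    maxwellMoments ρ U θ = ρ • fun k : Fin 5 => gaussMoment U √θ k := by
  have hs : √θ ≠ 0 := by positivity
  ext k
  fin_cases k <;>
    simp only [maxwellMoments, Fin.zero_eta, Fin.mk_one, Fin.reduceFinMk, Fin.isValue, cons_val,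
      Fin.coe_ofNat_eq_mod, Nat.reduceMod, Pi.smul_apply, smul_eq_mul, gaussMoment_succ U hs,
      gaussMoment_zero U hs, Real.sq_sqrt hθ.le] <;> grind

lemma posDef_hankel2_maxwellMoments {ρ θ : ℝ} (U : ℝ) (hρ : 0 < ρ) (hθ : 0 < θ) :
    (hankel2 (maxwellMoments ρ U θ)).PosDef := by
  rw [maxwellMoments_eq_smul_gaussMoment ρ U hθ, hankel2_smul]
  exact (posDef_hankel2_gaussMoment U (by positivity)).smul hρ

lemma density_pos_of_posDef_hankel2 {c : Fin 5 → ℝ} (hc : (hankel2 c).PosDef) : 0 < c 0 :=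
  hc.diag_pos (i := 0)

lemma temperature_pos_of_posDef_hankel2 {c : Fin 5 → ℝ} (hc : (hankel2 c).PosDef) :
    0 < c 2 / c 0 - (c 1 / c 0) ^ 2 := by
  have hρ := density_pos_of_posDef_hankel2 hc
  have hvariance : 0 < c 0 * (c 2 / c 0 - (c 1 / c 0) ^ 2) := by
    -- the Hankel form at the polynomial `X - c₁/c₀` is the central second moment
    refine (hc.dotProduct_mulVec_pos (x := ![-(c 1 / c 0), 1, 0]) (by simp)).trans_eq ?_
    simp only [hankel2, dotProduct, mulVec, Fin.sum_univ_three, Pi.star_apply, star_trivial,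
      of_apply, Fin.zero_eta, Fin.mk_one, Fin.reduceFinMk, Fin.isValue, Fin.coe_ofNat_eq_mod,
      Nat.reduceMod, Nat.reduceAdd, cons_val]
    field_simp
    ring
  exact pos_of_mul_pos_right hvariance hρ.le

end Hankel

section SpeedBounds

/-- A strictly realizable moment vector `M` with flux `F` whose signal speeds lie in `[N, P] ∋ 0`,
in the sense that `N H₂(M) ≤ H₂(F) ≤ P H₂(M)` in the Loewner order. -/
structure IsSpeedBounded (N P : ℝ) (M F : Fin 5 → ℝ) : Prop where
  nonpos : N ≤ 0
  nonneg : 0 ≤ P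
  lt : N < P
  posDef : (hankel2 M).PosDef
  smul_le : N • hankel2 M ≤ hankel2 F
  le_smul : hankel2 F ≤ P • hankel2 M

namespace IsSpeedBounded

variable {N P : ℝ} {M M' F F' : Fin 5 → ℝ}

lemma add (h : IsSpeedBounded N P M F) (h' : IsSpeedBounded N P M' F') :
    IsSpeedBounded N P (M + M') (F + F') where
  nonpos := h.nonpos
  nonneg := h.nonneg
  lt := h.lt
  posDef := h.posDef.add h'.posDef
  smul_le := by simpa only [hankel2_add, smul_add] using add_le_add h.smul_le h'.smul_le
  le_smul := by simpa only [hankel2_add, smul_add] using add_le_add h.le_smul h'.le_smul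

lemma smul {r : ℝ} (hr : 0 < r) (h : IsSpeedBounded N P M F) :
    IsSpeedBounded N P (r • M) (r • F) where
  nonpos := h.nonpos
  nonneg := h.nonneg
  lt := h.lt
  posDef := h.posDef.smul hr
  smul_le := by
    simpa only [hankel2_smul, smul_comm r] using smul_le_smul_of_nonneg_left h.smul_le hr.le
  le_smul := by
    simpa only [hankel2_smul, smul_comm r] using smul_le_smul_of_nonneg_left h.le_smul hr.le

lemma reflect (h : IsSpeedBounded N P M F) : IsSpeedBounded (-P) (-N) M (-F) where
  nonpos := neg_nonpos.2 h.nonneg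
  nonneg := neg_nonneg.2 h.nonpos
  lt := neg_lt_neg h.lt
  posDef := h.posDef
  smul_le := (neg_smul P _).trans_le (neg_le_neg h.le_smul)
  le_smul := (neg_le_neg h.smul_le).trans_eq (neg_smul N _).symm

end IsSpeedBounded

lemma isSpeedBounded_gaussMoment {N P v s : ℝ} (hs : 0 < s) (hN : N ≤ 0) (hP : 0 ≤ P)
    (hNv : N ≤ v - √3 * s) (hvP : v + √3 * s ≤ P) :
    IsSpeedBounded N P (fun k => gaussMoment v s k) fun k => gaussMoment v s (k + 1) := by
  have hoffset : 0 < √3 * s := by positivity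
  have hN_le (i : Fin 3) : N ≤ hermiteNode v s i := by
    fin_cases i
    exacts [hNv, show N ≤ v by linarith, show N ≤ v + √3 * s by linarith]
  have hle_P (i : Fin 3) : hermiteNode v s i ≤ P := by
    fin_cases i
    exacts [show v - √3 * s ≤ P by linarith, show v ≤ P by linarith, hvP]
  have hw (i : Fin 3) : 0 ≤ hermiteWeight i := (hermiteWeight_pos i).le
  refine ⟨hN, hP, by linarith, posDef_hankel2_gaussMoment v hs.ne', ?_, ?_⟩ <;>
    simp only [fun k : Fin 5 => gaussMoment_eq_sum_hermite v hs.ne' (show (k : ℕ) ≤ 5 by omega),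
      fun k : Fin 5 => gaussMoment_eq_sum_hermite v hs.ne' (show (k + 1 : ℕ) ≤ 5 by omega)]
  · rw [← sub_nonneg, sub_eq_neg_add, ← neg_smul]
    simpa only [one_smul] using smul_hankel2_add_smul_hankel2_succ_nonneg (α := -N) (β := 1) hw
      fun i => by linarith [hN_le i]
  · rw [← sub_nonneg, sub_eq_add_neg, ← neg_one_smul ℝ]
    exact smul_hankel2_add_smul_hankel2_succ_nonneg hw fun i => by linarith [hle_P i]

lemma EqmomParams.isSpeedBounded (W : EqmomParams) {a N P : ℝ} (ha : √3 ≤ a) (hN : N ≤ W.dm a)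
    (hP : W.dp a ≤ P) : IsSpeedBounded N P W.M W.F := by
  have hoffset : √3 * W.sig ≤ a * W.sig := mul_le_mul_of_nonneg_right ha W.hsig.le
  obtain ⟨⟨hN₁, hN₂⟩, hN₀⟩ : (N ≤ W.v1 - a * W.sig ∧ N ≤ W.v2 - a * W.sig) ∧ N ≤ 0 := by
    simpa only [dm, le_min_iff] using hN
  obtain ⟨⟨hP₁, hP₂⟩, hP₀⟩ : (W.v1 + a * W.sig ≤ P ∧ W.v2 + a * W.sig ≤ P) ∧ 0 ≤ P := by
    simpa only [dp, max_le_iff] using hP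
  have hnode₁ : IsSpeedBounded N P (fun k => gaussMoment W.v1 W.sig k) _ :=
    isSpeedBounded_gaussMoment W.hsig hN₀ hP₀ (by linarith) (by linarith)
  have hnode₂ : IsSpeedBounded N P (fun k => gaussMoment W.v2 W.sig k) _ :=
    isSpeedBounded_gaussMoment W.hsig hN₀ hP₀ (by linarith) (by linarith)
  exact (hnode₁.smul W.hr1).add (hnode₂.smul W.hr2)

end SpeedBounds

section HLL

lemma half_smul_add_smul_hll_nonneg {E : Type*} [AddCommGroup E] [PartialOrder E]
    [IsOrderedAddMonoid E] [Module ℝ E] [PosSMulMono ℝ E] {N P lam : ℝ} {m p f g : E}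
    (hN : N ≤ 0) (hP : 0 ≤ P) (hNP : N < P) (hlam : 0 ≤ lam) (hCFL : lam * (P - N) ≤ 1 / 2)
    (hp : 0 ≤ p) (hf : N • m ≤ f) (hg : N • p ≤ g) :
    0 ≤ (1 / 2 : ℝ) • p + lam • (P - N)⁻¹ • (P • f - N • g + (P * N) • (p - m)) := by
  have hwidth : 0 < P - N := sub_pos.2 hNP
  have hdecomp : (1 / 2 : ℝ) • p + lam • (P - N)⁻¹ • (P • f - N • g + (P * N) • (p - m)) =
      (1 / 2 + lam * N) • p + (lam * (P - N)⁻¹ * -N) • (g - N • p)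
        + (lam * (P - N)⁻¹ * P) • (f - N • m) := by
    match_scalars <;> field_simp
    ring
  rw [hdecomp]
  have hcoeff : 0 ≤ 1 / 2 + lam * N := by nlinarith
  exact add_nonneg (add_nonneg (smul_nonneg hcoeff hp)
    (smul_nonneg (mul_nonneg (by positivity) (neg_nonneg.2 hN)) (sub_nonneg.2 hg)))
    (smul_nonneg (by positivity) (sub_nonneg.2 hf))

variable {N P lam : ℝ} {Mm Mp Fm Fp : Fin 5 → ℝ}

lemma hllFlux_eq_smul (P N : ℝ) (Mm Mp Fm Fp : Fin 5 → ℝ) :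
    hllFlux P N Mm Mp Fm Fp = (P - N)⁻¹ • (P • Fm - N • Fp + (P * N) • (Mp - Mm)) :=
  funext fun _ => div_eq_inv_mul _ _

lemma hllFlux_reflect (P N : ℝ) (Mm Mp Fm Fp : Fin 5 → ℝ) :
    hllFlux (-N) (-P) Mp Mm (-Fp) (-Fm) = -hllFlux P N Mm Mp Fm Fp := by
  ext k
  simp only [hllFlux, Pi.neg_apply]
  ring

lemma hankel2_half_add_hllFlux_nonneg (hm : IsSpeedBounded N P Mm Fm)
    (hp : IsSpeedBounded N P Mp Fp) (hlam : 0 ≤ lam) (hCFL : lam * (P - N) ≤ 1 / 2) :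
    0 ≤ hankel2 ((1 / 2 : ℝ) • Mp + lam • hllFlux P N Mm Mp Fm Fp) := by
  simp only [hllFlux_eq_smul, hankel2_add, hankel2_sub, hankel2_smul]
  exact half_smul_add_smul_hll_nonneg hm.nonpos hm.nonneg hm.lt hlam hCFL
    hp.posDef.posSemidef.nonneg hm.smul_le hp.smul_le

lemma hankel2_half_sub_hllFlux_nonneg (hm : IsSpeedBounded N P Mm Fm)
    (hp : IsSpeedBounded N P Mp Fp) (hlam : 0 ≤ lam) (hCFL : lam * (P - N) ≤ 1 / 2) :
    0 ≤ hankel2 ((1 / 2 : ℝ) • Mm - lam • hllFlux P N Mm Mp Fm Fp) := by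
  rw [sub_eq_add_neg, ← smul_neg, ← hllFlux_reflect]
  exact hankel2_half_add_hllFlux_nonneg hp.reflect hm.reflect hlam
    (by rwa [neg_sub_neg])

end HLL

theorem eqmom_hll_bgk_semiImplicit_posDef_general {Δt lam τ : ℝ}
    (hΔt : 0 < Δt) (hlam : 0 ≤ lam) (hτ : 0 < τ) {dLp dLm dRp dRm : ℝ}
    {MLm MLp MRm MRp FLm FLp FRm FRp : Fin 5 → ℝ}
    (hLm : IsSpeedBounded dLm dLp MLm FLm) (hLp : IsSpeedBounded dLm dLp MLp FLp)
    (hRm : IsSpeedBounded dRm dRp MRm FRm) (hRp : IsSpeedBounded dRm dRp MRp FRp)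
    {FL FR : Fin 5 → ℝ} (hFL : FL = hllFlux dLp dLm MLm MLp FLm FLp)
    (hFR : FR = hllFlux dRp dRm MRm MRp FRm FRp)
    {Mbar : Fin 5 → ℝ} (hMbar : ∀ k, Mbar k = (MLp k + MRm k) / 2)
    {G : Fin 5 → ℝ}
    (hG : G = maxwellMoments (Mbar 0) (Mbar 1 / Mbar 0)
        (Mbar 2 / Mbar 0 - (Mbar 1 / Mbar 0) ^ 2))
    {Mnew : Fin 5 → ℝ}
    (hMnew : ∀ k, (1 + Δt / τ) * Mnew k = Mbar k - lam * (FR k - FL k) + Δt / τ * G k)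
    (hCFL_L : lam * (dLp - dLm) ≤ 1 / 2) (hCFL_R : lam * (dRp - dRm) ≤ 1 / 2) :
    (hankel2 Mnew).PosDef := by
  have hratio : 0 < Δt / τ := div_pos hΔt hτ
  have hMbar_posDef : (hankel2 Mbar).PosDef := by
    have hmean : Mbar = (1 / 2 : ℝ) • (MLp + MRm) := by
      ext k; simp only [hMbar k, Pi.smul_apply, Pi.add_apply, smul_eq_mul]; ring
    exact hmean ▸ (hLp.posDef.add hRm.posDef).smul one_half_pos
  have hG_posDef : (hankel2 G).PosDef :=
    hG ▸ posDef_hankel2_maxwellMoments _ (density_pos_of_posDef_hankel2 hMbar_posDef)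
      (temperature_pos_of_posDef_hankel2 hMbar_posDef)
  have hL := hankel2_half_add_hllFlux_nonneg hLm hLp hlam hCFL_L
  have hR := hankel2_half_sub_hllFlux_nonneg hRm hRp hlam hCFL_R
  rw [← hFL] at hL
  rw [← hFR] at hR
  have hupdate : Mnew = (1 + Δt / τ)⁻¹ • (((1 / 2 : ℝ) • MLp + lam • FL)
      + ((1 / 2 : ℝ) • MRm - lam • FR) + (Δt / τ) • G) := by
    rw [eq_inv_smul_iff₀ (by positivity)]
    ext k
    simp only [Pi.smul_apply, Pi.add_apply, Pi.sub_apply, smul_eq_mul, hMnew k, hMbar k]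
    ring
  rw [hupdate]
  exact ((hG_posDef.smul hratio).posSemidef_add (add_nonneg hL hR).posSemidef).smul
    (by positivity)

/-- realizability of the semi-implicit BGK HLL finite-volume update for the
two-node Gaussian-EQMOM closure.  With `M̄ = ½(M_L⁺ + M_R⁻)`, `ρ = M̄₀`, `U = M̄₁/M̄₀`,
`θ = M̄₂/M̄₀ − U²`, `G` the Maxwellian moment vector, and `M_new` the solution of
`(1 + Δt/τ)M_new = M̄ − λ(F̂_R − F̂_L) + (Δt/τ)G`, the CFL conditions `λ(δ⁺ − δ⁻) ≤ 1/2`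
at both interfaces imply that `H₂(M_new)` is positive definite. -/
theorem eqmom_hll_bgk_semiImplicit_posDef (a Δt lam τ : ℝ)
    (ha : Real.sqrt 3 < a) (hΔt : 0 < Δt) (hlam : 0 < lam) (hτ : 0 < τ)
    (WLm WLp WRm WRp : EqmomParams)
    (dLp dLm dRp dRm : ℝ)
    (hdLp : dLp = max (WLm.dp a) (WLp.dp a))
    (hdLm : dLm = min (WLm.dm a) (WLp.dm a))
    (hdRp : dRp = max (WRm.dp a) (WRp.dp a))
    (hdRm : dRm = min (WRm.dm a) (WRp.dm a))
    (FL FR : Fin 5 → ℝ)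
    (hFL : FL = hllFlux dLp dLm WLm.M WLp.M WLm.F WLp.F)
    (hFR : FR = hllFlux dRp dRm WRm.M WRp.M WRm.F WRp.F)
    (Mbar : Fin 5 → ℝ) (hMbar : ∀ k, Mbar k = (WLp.M k + WRm.M k) / 2)
    (G : Fin 5 → ℝ)
    (hG : G = maxwellMoments (Mbar 0) (Mbar 1 / Mbar 0)
        (Mbar 2 / Mbar 0 - (Mbar 1 / Mbar 0) ^ 2))
    (Mnew : Fin 5 → ℝ)
    (hMnew : ∀ k, (1 + Δt / τ) * Mnew k = Mbar k - lam * (FR k - FL k) + Δt / τ * G k)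
    (hCFL_L : lam * (dLp - dLm) ≤ 1 / 2)
    (hCFL_R : lam * (dRp - dRm) ≤ 1 / 2) :
    (hankel2 Mnew).PosDef := by
  subst hdLp hdLm hdRp hdRm
  exact eqmom_hll_bgk_semiImplicit_posDef_general hΔt hlam.le hτ
    (WLm.isSpeedBounded ha.le (min_le_left _ _) (le_max_left _ _))
    (WLp.isSpeedBounded ha.le (min_le_right _ _) (le_max_right _ _))
    (WRm.isSpeedBounded ha.le (min_le_left _ _) (le_max_left _ _))
    (WRp.isSpeedBounded ha.le (min_le_right _ _) (le_max_right _ _))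
    hFL hFR hMbar hG hMnew hCFL_L hCFL_R
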